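/- Let A be a complex unital Banach algebra and a ∈ A. Then a has an ag-Drazin inverse x such that the spectrum σ(a − a²x) is a finite set if and only if a is eg-Drazin invertible, i.e., there exists x ∈ A with ax = xa, xax = x, and a − a²x generalized Drazin invertible. -/

import Mathlib

open Filter Topology

/-- An element of a complex Banach algebra is quasinilpotent if its spectrum is `{0}`. -/
def IsQuasinilpotent {A : Type*} [NormedRing A] [NormedAlgebra ℂ A] (b : A) : Prop :=
  spectrum ℂ b = {0}

/-- `a` is generalized Drazin invertible. -/
def IsGDrazinInv {A : Type*} [NormedRing A] [NormedAlgebra ℂ A] (a : A) : Prop :=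
  ∃ x : A, a * x = x * a ∧ x * a * x = x ∧ IsQuasinilpotent (a - a ^ 2 * x)

/-- `a ∈ A^acc`: `a - λ1` is generalized Drazin invertible for all nonzero `λ`. -/
def MemAcc {A : Type*} [NormedRing A] [NormedAlgebra ℂ A] (a : A) : Prop :=
  ∀ l : ℂ, l ≠ 0 → IsGDrazinInv (a - l • (1 : A))

/-- `x` is an ag-Drazin inverse of `a`. -/
def IsAgDrazinInverseOf {A : Type*} [NormedRing A] [NormedAlgebra ℂ A] (x a : A) : Prop :=
  a * x = x * a ∧ x * a * x = x ∧ MemAcc (a - a ^ 2 * x)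

/-- `a` is ag-Drazin invertible. -/
def IsAgDrazinInv {A : Type*} [NormedRing A] [NormedAlgebra ℂ A] (a : A) : Prop :=
  ∃ x : A, IsAgDrazinInverseOf x a

/-- The generalized Drazin spectrum. -/
def gDrazinSpectrum {A : Type*} [NormedRing A] [NormedAlgebra ℂ A] (a : A) : Set ℂ :=
  {l : ℂ | ¬ IsGDrazinInv (a - l • (1 : A))}

/-- The ag-Drazin spectrum. -/
def agDrazinSpectrum {A : Type*} [NormedRing A] [NormedAlgebra ℂ A] (a : A) : Set ℂ :=
  {l : ℂ | ¬ IsAgDrazinInv (a - l • (1 : A))}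

section helpers

variable {A : Type*} [NormedRing A] [NormedAlgebra ℂ A]

lemma quasi_of_unit [CompleteSpace A] [Nontrivial A] {s : A}
    (h : ∀ m : ℂ, m ≠ 0 → IsUnit (s - m • (1 : A))) : IsQuasinilpotent s := by
  have hsub : spectrum ℂ s ⊆ {0} := by
    intro m hm
    by_contra hne
    apply hm
    have := (h m hne).neg
    rwa [neg_sub, ← Algebra.algebraMap_eq_smul_one] at this
  unfold IsQuasinilpotent
  exact (Set.Nonempty.subset_singleton_iff (spectrum.nonempty s)).1 hsub

lemma unit_of_notMem {s : A} {m : ℂ} (h : m ∉ spectrum ℂ s) : IsUnit (s - m • (1 : A)) := by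
  rw [spectrum.notMem_iff] at h
  have := h.neg
  rwa [neg_sub, Algebra.algebraMap_eq_smul_one] at this

lemma unit_of_quasi {s : A} (h : IsQuasinilpotent s) {m : ℂ} (hm : m ≠ 0) :
    IsUnit (s - m • (1 : A)) := by
  apply unit_of_notMem
  rw [h]; simpa using hm

lemma exists_inv {b : A} (h : IsUnit b) : ∃ u : A, b * u = 1 ∧ u * b = 1 ∧
    ∀ c, b * c = c * b → u * c = c * u := by
  obtain ⟨v, rfl⟩ := h
  refine ⟨↑v⁻¹, by simp, by simp, fun c hc => ?_⟩
  have : Commute (v : A) c := hc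
  exact this.units_inv_left

/-- algebra of corner inverses -/
lemma unit_corner {s e u : A} {m : ℂ} (hm : m ≠ 0) (he : e * e = e) (hse : s * e = e * s)
    (hue : u * e = e * u) (h1 : (s - m • (1 : A)) * u * e = e)
    (h2 : u * (s - m • (1 : A)) * e = e) : IsUnit (s * e - m • (1 : A)) := by
  have hmm : m * m⁻¹ = 1 := mul_inv_cancel₀ hm
  have hmm' : m⁻¹ * m = 1 := inv_mul_cancel₀ hm
  have e1 : s * u * e = e + m • (u * e) := by
    simp only [sub_mul, smul_mul_assoc, one_mul] at h1
    rw [sub_eq_iff_eq_add] at h1; exact h1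
  have e2 : u * s * e = e + m • (u * e) := by
    simp only [mul_sub, sub_mul, smul_mul_assoc, mul_smul_comm, mul_one] at h2
    rw [sub_eq_iff_eq_add] at h2; exact h2
  have k1 : s * e * (u * e) = s * u * e := by
    rw [hue, mul_assoc s, ← mul_assoc e e, he, mul_assoc s u, hue]
  have k2 : u * e * (s * e) = u * s * e := by
    rw [hse, mul_assoc u, ← mul_assoc e e, he, mul_assoc u s, hse]
  have k3 : s * e * e = s * e := by rw [mul_assoc, he]
  have k4 : e * (s * e) = s * e := by rw [← mul_assoc, ← hse, k3]
  refine ⟨⟨s * e - m • (1 : A), u * e - m⁻¹ • (1 - e), ?_, ?_⟩, rfl⟩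
  · simp only [sub_mul, mul_sub, smul_mul_assoc, mul_smul_comm, mul_one, one_mul, smul_sub,
      smul_smul, k1, k3, e1, hmm, hmm', one_smul]
    abel
  · simp only [sub_mul, mul_sub, smul_mul_assoc, mul_smul_comm, mul_one, one_mul, smul_sub,
      smul_smul, k2, k4, e2, hmm, hmm', one_smul]
    abel

lemma quasi_corner [CompleteSpace A] [Nontrivial A] {s e : A} (hs : IsQuasinilpotent s)
    (he : e * e = e) (hse : s * e = e * s) : IsQuasinilpotent (s * e) := by
  apply quasi_of_unit
  intro m hm
  obtain ⟨u, h1, h2, h3⟩ := exists_inv (unit_of_quasi hs hm)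
  refine unit_corner hm he hse (h3 e ?_) (by rw [h1, one_mul]) (by rw [h2, one_mul])
  simp [sub_mul, mul_sub, hse]

lemma quasi_zero_lim [CompleteSpace A] {s : A} (hs : IsQuasinilpotent s) (K : ℝ) (hK : 0 ≤ K) :
    Tendsto (fun n : ℕ => ‖s ^ n‖ * K ^ n) atTop (𝓝 0) := by
  have hr : spectralRadius ℂ s = 0 := by
    unfold spectralRadius
    rw [show spectrum ℂ s = {0} from hs]; simp
  have hg := spectrum.pow_norm_pow_one_div_tendsto_nhds_spectralRadius s
  rw [hr] at hg
  have hpos : (0 : ℝ) < 1 / (2 * (K + 1)) := by positivity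
  have hev := hg.eventually_lt_const (ENNReal.ofReal_pos.2 hpos)
  have hgeo : Tendsto (fun n : ℕ => ((1 : ℝ) / 2) ^ n) atTop (𝓝 0) :=
    tendsto_pow_atTop_nhds_zero_of_lt_one (by norm_num) (by norm_num)
  refine squeeze_zero' (Eventually.of_forall fun n => by positivity) ?_ hgeo
  filter_upwards [hev, eventually_gt_atTop 0] with n hn hn0
  rw [ENNReal.ofReal_lt_ofReal_iff hpos] at hn
  have h0 : (0 : ℝ) ≤ ‖s ^ n‖ := norm_nonneg _
  have : ‖s ^ n‖ ≤ (1 / (2 * (K + 1))) ^ n := by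
    calc ‖s ^ n‖ = (‖s ^ n‖ ^ (1 / n : ℝ)) ^ n := by
          rw [one_div, Real.rpow_inv_natCast_pow h0 hn0.ne']
      _ ≤ _ := pow_le_pow_left₀ (by positivity) hn.le n
  calc ‖s ^ n‖ * K ^ n ≤ (1 / (2 * (K + 1))) ^ n * (K + 1) ^ n := by
        gcongr; linarith
    _ = (1 / 2) ^ n := by
        rw [← mul_pow]; congr 1; field_simp

lemma zero_of_sandwich [CompleteSpace A] {s w X : A} (hs : IsQuasinilpotent s)
    (h : s * X * w = X) : X = 0 := by
  have hn : ∀ n : ℕ, s ^ n * X * w ^ n = X := by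
    intro n
    induction n with
    | zero => simp
    | succ n ih =>
      calc s ^ (n+1) * X * w ^ (n+1) = s ^ n * (s * X * w) * w ^ n := by
            rw [pow_succ, pow_succ']; simp only [mul_assoc]
        _ = X := by rw [h, ih]
  have hb : ∀ n : ℕ, 0 < n → ‖X‖ ≤ ‖s ^ n‖ * ‖w‖ ^ n * ‖X‖ := by
    intro n hn0
    calc ‖X‖ = ‖s ^ n * X * w ^ n‖ := by rw [hn]
      _ ≤ ‖s ^ n‖ * ‖X‖ * ‖w ^ n‖ := norm_mul₃_le
      _ ≤ ‖s ^ n‖ * ‖X‖ * ‖w‖ ^ n := by gcongr; exact norm_pow_le' w hn0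
      _ = _ := by ring
  have hl := (quasi_zero_lim hs ‖w‖ (norm_nonneg _)).mul_const ‖X‖
  rw [zero_mul] at hl
  have : ‖X‖ ≤ 0 := ge_of_tendsto hl (by
    filter_upwards [eventually_gt_atTop 0] with n h using hb n h)
  exact norm_le_zero_iff.1 this

lemma zero_of_sandwich' [CompleteSpace A] {s w X : A} (hs : IsQuasinilpotent s)
    (h : w * X * s = X) : X = 0 := by
  have hn : ∀ n : ℕ, w ^ n * X * s ^ n = X := by
    intro n
    induction n with
    | zero => simp
    | succ n ih =>
      calc w ^ (n+1) * X * s ^ (n+1) = w ^ n * (w * X * s) * s ^ n := by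
            rw [pow_succ, pow_succ']; simp only [mul_assoc]
        _ = X := by rw [h, ih]
  have hb : ∀ n : ℕ, 0 < n → ‖X‖ ≤ ‖s ^ n‖ * ‖w‖ ^ n * ‖X‖ := by
    intro n hn0
    calc ‖X‖ = ‖w ^ n * X * s ^ n‖ := by rw [hn]
      _ ≤ ‖w ^ n‖ * ‖X‖ * ‖s ^ n‖ := norm_mul₃_le
      _ ≤ ‖w‖ ^ n * ‖X‖ * ‖s ^ n‖ := by gcongr; exact norm_pow_le' w hn0
      _ = _ := by ring
  have hl := (quasi_zero_lim hs ‖w‖ (norm_nonneg _)).mul_const ‖X‖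
  rw [zero_mul] at hl
  have : ‖X‖ ≤ 0 := ge_of_tendsto hl (by
    filter_upwards [eventually_gt_atTop 0] with n h using hb n h)
  exact norm_le_zero_iff.1 this

lemma alg_y {R : Type*} [Ring R] {b e y : R} (he : e * e = e) (hbe : b * e = e * b)
    (y1 : b * e * y = y * (b * e)) (y2 : y * (b * e) * y = y) :
    y * e = y ∧ e * y = y ∧ b * y = y * b := by
  have t : y * (y * (b * e)) = y := by rw [← y1, ← mul_assoc, y2]
  have t' : e * b * y * y = y := by rw [← hbe, y1, y2]
  have ye : y * e = y := by
    calc y * e = y * (y * (b * e)) * e := by rw [t]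
      _ = y * (y * (b * (e * e))) := by simp only [mul_assoc]
      _ = y := by rw [he, t]
  have ey : e * y = y := by
    calc e * y = e * (e * b * y * y) := by rw [t']
      _ = (e * e) * b * y * y := by simp only [mul_assoc]
      _ = y := by rw [he, t']
  refine ⟨ye, ey, ?_⟩
  calc b * y = b * e * y := by rw [mul_assoc, ey]
    _ = y * e * b := by rw [y1, hbe, mul_assoc]
    _ = y * b := by rw [ye]

lemma alg_u {R : Type*} [Ring R] {b e u v : R} (hbe : b * e = e * b)
    (hue : u * e = e * u) (hvb : v * (1 - e) = b * (1 - e)) (u1 : v * u = 1) (u2 : u * v = 1) :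
    b * (u * (1 - e)) = 1 - e ∧ u * (1 - e) * b = 1 - e := by
  have hup : u * (1 - e) = (1 - e) * u := by rw [mul_sub, sub_mul, hue, mul_one, one_mul]
  have hbp : b * (1 - e) = (1 - e) * b := by rw [mul_sub, sub_mul, hbe, mul_one, one_mul]
  constructor
  · rw [hup, ← mul_assoc, ← hvb, mul_assoc, ← hup, ← mul_assoc, u1, one_mul]
  · rw [mul_assoc, ← hbp, ← hvb, ← mul_assoc, u2, one_mul]

lemma alg_fin {R : Type*} [Ring R] {b e u y : R} (he : e * e = e) (hbe : b * e = e * b)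
    (hue : u * e = e * u) (ye : y * e = y) (ey : e * y = y)
    (y2 : y * (b * e) * y = y)
    (bu1 : b * (u * (1 - e)) = 1 - e) :
    (y * b + (1 - e)) * (y + u * (1 - e)) = y + u * (1 - e) ∧
    b - b * (b * y + (1 - e)) = b * e - (b * e) ^ 2 * y := by
  constructor
  · have a1 : y * b * y = y := by
      calc y * b * y = y * b * (e * y) := by rw [ey]
        _ = y * (b * e) * y := by simp only [mul_assoc]
        _ = y := y2
    have a2 : y * b * (u * (1 - e)) = 0 := by rw [mul_assoc, bu1, mul_sub, ye, mul_one, sub_self]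
    have a3 : (1 - e) * y = 0 := by rw [sub_mul, ey, one_mul, sub_self]
    have a4 : (1 - e) * (u * (1 - e)) = u * (1 - e) := by
      have : e * (u * (1 - e)) = 0 := by
        rw [← mul_assoc, ← hue, mul_assoc, mul_sub, he, mul_one, sub_self, mul_zero]
      rw [sub_mul, this, one_mul, sub_zero]
    rw [add_mul, mul_add, mul_add, a1, a2, a3, a4, add_zero, zero_add]
  · have : (b * e) ^ 2 * y = b * (b * y) := by
      calc (b * e) ^ 2 * y = b * (e * b) * (e * y) := by rw [pow_two]; simp only [mul_assoc]
        _ = b * b * (e * (e * y)) := by rw [← hbe]; simp only [mul_assoc]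
        _ = b * (b * y) := by rw [ey, ey, mul_assoc]
    rw [this, mul_add, mul_sub, mul_one]; abel

lemma alg_comm {R : Type*} [Ring R] {c w e : R} (h1 : c * w = w * c) (h2 : w * c * w = w)
    (hce : c * e = e * c) :
    (c - c ^ 2 * w) * ((1 - c * w) * e * (c * w)) * w = (1 - c * w) * e * (c * w) ∧
    w * ((c * w) * e * (1 - c * w)) * (c - c ^ 2 * w) = (c * w) * e * (1 - c * w) := by
  have hq : (c * w) * (c * w) = c * w := by rw [mul_assoc, ← mul_assoc w, h2]
  have s1 : c - c ^ 2 * w = c * (1 - c * w) := by rw [mul_sub, pow_two, mul_one, mul_assoc]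
  have cq : c * (c * w) = (c * w) * c := by rw [mul_assoc, h1]
  have s2 : c - c ^ 2 * w = (1 - c * w) * c := by
    rw [s1, mul_sub, sub_mul, cq, mul_one, one_mul]
  have hpp : (1 - c * w) * (1 - c * w) = 1 - c * w := by
    rw [mul_sub, sub_mul _ _ (c * w), hq]; simp
  have hcp : c * (1 - c * w) = (1 - c * w) * c := s1.symm.trans s2
  constructor
  · rw [s1]
    calc c * (1 - c * w) * ((1 - c * w) * e * (c * w)) * w
        = c * ((1 - c * w) * (1 - c * w)) * e * (c * w) * w := by simp only [mul_assoc]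
      _ = (1 - c * w) * (c * e) * (c * w) * w := by rw [hpp, hcp]; simp only [mul_assoc]
      _ = (1 - c * w) * e * (c * (c * w) * w) := by rw [hce]; simp only [mul_assoc]
      _ = (1 - c * w) * e * ((c * w) * (c * w)) := by rw [cq]; simp only [mul_assoc]
      _ = _ := by rw [hq]
  · rw [s2]
    calc w * ((c * w) * e * (1 - c * w)) * ((1 - c * w) * c)
        = w * (c * w) * e * ((1 - c * w) * (1 - c * w) * c) := by simp only [mul_assoc]
      _ = w * (c * w) * (e * c) * (1 - c * w) := by rw [hpp, ← hcp]; simp only [mul_assoc]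
      _ = w * ((c * w) * c) * e * (1 - c * w) := by rw [← hce]; simp only [mul_assoc]
      _ = (w * c) * (c * w) * e * (1 - c * w) := by rw [← cq]; simp only [mul_assoc]
      _ = _ := by rw [← h1, hq]

lemma gd_comm [CompleteSpace A] {c w e : A} (h1 : c * w = w * c) (h2 : w * c * w = w)
    (h3 : IsQuasinilpotent (c - c ^ 2 * w)) (hce : c * e = e * c) : w * e = e * w := by
  have hX : (1 - c * w) * e * (c * w) = 0 :=
    zero_of_sandwich (w := w) h3 (alg_comm h1 h2 hce).1
  have hY : (c * w) * e * (1 - c * w) = 0 :=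
    zero_of_sandwich' (w := w) h3 (alg_comm h1 h2 hce).2
  have h : c * w * e = e * (c * w) := by
    rw [sub_mul, sub_mul, one_mul, sub_eq_zero] at hX
    rw [mul_sub, mul_one, sub_eq_zero] at hY
    exact hY.trans hX.symm
  calc w * e = w * (c * w * e) := by rw [← mul_assoc, ← mul_assoc, h2]
    _ = w * e * c * w := by rw [h]; simp only [mul_assoc]
    _ = w * (c * e) * w := by rw [hce]; simp only [mul_assoc]
    _ = (c * w * e) * w := by rw [h1]; simp only [mul_assoc]
    _ = e * (w * c * w) := by rw [h, h1]; simp only [mul_assoc]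
    _ = e * w := by rw [h2]

lemma gd_of_unit [CompleteSpace A] [Nontrivial A] {b : A} (h : IsUnit b) : IsGDrazinInv b := by
  obtain ⟨u, h1, h2, -⟩ := exists_inv h
  refine ⟨u, by rw [h1, h2], by rw [h2, one_mul], ?_⟩
  rw [pow_two, mul_assoc, h1, mul_one, sub_self]
  exact spectrum.zero_eq

lemma acc_of_quasi [CompleteSpace A] [Nontrivial A] {b : A} (h : IsQuasinilpotent b) :
    MemAcc b := fun _ hl => gd_of_unit (unit_of_quasi h hl)

lemma acc_corner [CompleteSpace A] [Nontrivial A] {b e : A} (h : MemAcc b)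
    (he : e * e = e) (hbe : b * e = e * b) : MemAcc (b * e) := by
  intro m hm
  obtain ⟨w, h1, h2, h3⟩ := h m hm
  have hce : (b - m • (1 : A)) * e = e * (b - m • (1 : A)) := by
    simp [sub_mul, mul_sub, hbe]
  have hwe := gd_comm h1 h2 h3 hce
  set c := b - m • (1 : A) with hc
  have hmm : m * m⁻¹ = 1 := mul_inv_cancel₀ hm
  have hmm' : m⁻¹ * m = 1 := inv_mul_cancel₀ hm
  have hd : b * e - m • (1 : A) = c * e - m • (1 - e) := by
    simp only [hc, sub_mul, smul_mul_assoc, one_mul, smul_sub]; abel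
  rw [hd]
  have p1 : (c * e - m • (1 - e)) * (w * e - m⁻¹ • (1 - e)) = c * w * e + (1 - e) := by
    have : (c * e - m • (1 - e)) * (w * e - m⁻¹ • (1 - e))
      = c * e * (w * e) - m⁻¹ • (c * e * (1 - e)) - m • ((1 - e) * (w * e))
        + (m * m⁻¹) • ((1 - e) * (1 - e)) := by
      simp only [sub_mul, mul_sub, smul_mul_assoc, mul_smul_comm, smul_sub, mul_one, one_mul,
        smul_smul, hmm, hmm']; abel
    rw [this, hmm, one_smul, show c * e * (1 - e) = 0 by (try simp only [mul_sub, sub_mul, mul_add, add_mul, mul_one, one_mul, pow_two] at *) <;> grind,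
      show (1 - e) * (w * e) = 0 by (try simp only [mul_sub, sub_mul, mul_add, add_mul, mul_one, one_mul, pow_two] at *) <;> grind, smul_zero, smul_zero]
    (try simp only [mul_sub, sub_mul, mul_add, add_mul, mul_one, one_mul, pow_two] at *) <;> grind
  have p2 : (w * e - m⁻¹ • (1 - e)) * (c * e - m • (1 - e)) = c * w * e + (1 - e) := by
    have : (w * e - m⁻¹ • (1 - e)) * (c * e - m • (1 - e))
      = w * e * (c * e) - m • (w * e * (1 - e)) - m⁻¹ • ((1 - e) * (c * e))
        + (m * m⁻¹) • ((1 - e) * (1 - e)) := by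
      simp only [sub_mul, mul_sub, smul_mul_assoc, mul_smul_comm, smul_sub, mul_one, one_mul,
        smul_smul, hmm, hmm']; abel
    rw [this, hmm, one_smul, show w * e * (1 - e) = 0 by (try simp only [mul_sub, sub_mul, mul_add, add_mul, mul_one, one_mul, pow_two] at *) <;> grind,
      show (1 - e) * (c * e) = 0 by (try simp only [mul_sub, sub_mul, mul_add, add_mul, mul_one, one_mul, pow_two] at *) <;> grind, smul_zero, smul_zero]
    (try simp only [mul_sub, sub_mul, mul_add, add_mul, mul_one, one_mul, pow_two] at *) <;> grind
  refine ⟨w * e - m⁻¹ • (1 - e), by rw [p1, p2], ?_, ?_⟩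
  · rw [p2]
    simp only [mul_sub, mul_smul_comm]
    rw [show (c * w * e + (1 - e)) * (w * e) = w * e by (try simp only [mul_sub, sub_mul, mul_add, add_mul, mul_one, one_mul, pow_two] at *) <;> grind]
    rw [← mul_sub,
      show (c * w * e + (1 - e)) * (1 - e) = 1 - e by (try simp only [mul_sub, sub_mul, mul_add, add_mul, mul_one, one_mul, pow_two] at *) <;> grind]
  · rw [pow_two, mul_assoc, p1]
    have : c * e - m • (1 - e) - (c * e - m • (1 - e)) * (c * w * e + (1 - e))
        = (c - c ^ 2 * w) * e := by
      rw [sub_mul (c * e), smul_mul_assoc,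
        show (1 - e) * (c * w * e + (1 - e)) = 1 - e by (try simp only [mul_sub, sub_mul, mul_add, add_mul, mul_one, one_mul, pow_two] at *) <;> grind]
      (try simp only [mul_sub, sub_mul, mul_add, add_mul, mul_one, one_mul, pow_two] at *) <;> grind
    rw [this]
    exact quasi_corner h3 he (by (try simp only [mul_sub, sub_mul, mul_add, add_mul, mul_one, one_mul, pow_two] at *) <;> grind)

lemma gd_of_finite [CompleteSpace A] [Nontrivial A] (n : ℕ) : ∀ b : A, MemAcc b →
    (spectrum ℂ b \ {0}).Finite → (spectrum ℂ b \ {0}).ncard ≤ n → IsGDrazinInv b := by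
  induction n with
  | zero =>
    intro b _ hf hn
    have hemp : spectrum ℂ b \ {0} = ∅ := (Set.ncard_eq_zero hf).1 (by omega)
    refine ⟨0, by simp, by simp, ?_⟩
    simp only [mul_zero, sub_zero]
    apply quasi_of_unit
    intro m hm
    apply unit_of_notMem
    intro hmem
    have : m ∈ spectrum ℂ b \ {0} := ⟨hmem, hm⟩
    rw [hemp] at this; exact this
  | succ n ih =>
    intro b hacc hf hn
    by_cases hemp : (spectrum ℂ b \ {0}).ncard = 0
    · exact ih b hacc hf (by omega)
    obtain ⟨l, hlmem⟩ := Set.nonempty_of_ncard_ne_zero hemp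
    have hl : l ≠ 0 := hlmem.2
    obtain ⟨z, h1, h2, h3⟩ := hacc l hl
    obtain ⟨c, hc⟩ : ∃ c, c = b - l • (1 : A) := ⟨_, rfl⟩
    rw [← hc] at h1 h2 h3
    obtain ⟨e, hedef⟩ : ∃ e, e = c * z := ⟨_, rfl⟩
    have he : e * e = e := by (try simp only [mul_sub, sub_mul, mul_add, add_mul, mul_one, one_mul, pow_two] at *) <;> grind
    have hce : c * e = e * c := by (try simp only [mul_sub, sub_mul, mul_add, add_mul, mul_one, one_mul, pow_two] at *) <;> grind
    have hze : z * e = e * z := by (try simp only [mul_sub, sub_mul, mul_add, add_mul, mul_one, one_mul, pow_two] at *) <;> grind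
    have hbc : b = c + l • (1 : A) := by rw [hc]; abel
    have hbe : b * e = e * b := by
      rw [hbc, add_mul, mul_add, hce]; simp
    have hsub : spectrum ℂ (b * e) \ {0} ⊆ (spectrum ℂ b \ {0}) \ {l} := by
      rintro m ⟨hm, hm0⟩
      have hm0' : m ≠ 0 := hm0
      have key : ∀ u : A, u * e = e * u → (b - m • (1 : A)) * u * e = e →
          u * (b - m • (1 : A)) * e = e → False := by
        intro u hu k1 k2
        have := (unit_corner hm0' he hbe hu k1 k2).neg
        rw [neg_sub, ← Algebra.algebraMap_eq_smul_one] at this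
        exact hm this
      refine ⟨⟨?_, hm0⟩, ?_⟩
      · intro hu
        obtain ⟨u, g1, g2, g3⟩ := exists_inv (unit_of_notMem (s := b) (m := m) (fun h => h hu))
        exact key u (g3 e (by simp [sub_mul, mul_sub, hbe])) (by rw [g1, one_mul])
          (by rw [g2, one_mul])
      · intro hml
        have hml' : m = l := hml
        subst hml'
        rw [← hc] at key
        exact key z hze (by (try simp only [mul_sub, sub_mul, mul_add, add_mul, mul_one, one_mul, pow_two] at *) <;> grind) (by grind)
    have hf' : (spectrum ℂ (b * e) \ {0}).Finite := (hf.diff).subset hsub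
    have hn' : (spectrum ℂ (b * e) \ {0}).ncard ≤ n := by
      have q1 := Set.ncard_le_ncard hsub hf.diff
      have q2 := Set.ncard_diff_singleton_add_one hlmem hf
      omega
    obtain ⟨y, y1, y2, y3⟩ := ih (b * e) (acc_corner hacc he hbe) hf' hn'
    have hu := unit_of_quasi h3 (neg_ne_zero.2 hl)
    obtain ⟨v, hv⟩ : ∃ v, v = c - c ^ 2 * z - (-l) • (1 : A) := ⟨_, rfl⟩
    rw [← hv] at hu
    obtain ⟨u, u1, u2, u3⟩ := exists_inv hu
    have hve : v * e = e * v := by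
      rw [hv, sub_mul, mul_sub, smul_mul_assoc, mul_smul_comm, one_mul, mul_one]
      congr 1
      have k1 : Commute c e := hce
      have k2 : Commute z e := hze
      exact k1.sub_left ((k1.pow_left 2).mul_left k2)
    have hue := u3 e hve
    have hvb : v * (1 - e) = b * (1 - e) := by
      rw [hv, hbc, neg_smul, sub_neg_eq_add, add_mul, add_mul]
      congr 1
      rw [pow_two, mul_assoc, ← hedef, sub_mul, mul_assoc c e, mul_sub e, he, mul_one, sub_self,
        mul_zero, sub_zero]
    obtain ⟨ye, ey, by1⟩ := alg_y he hbe y1 y2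
    obtain ⟨bu1, bu2⟩ := alg_u hbe hue hvb u1 u2
    obtain ⟨f1, f2⟩ := alg_fin he hbe hue ye ey y2 bu1
    refine ⟨y + u * (1 - e), ?_, ?_, ?_⟩
    · rw [mul_add, add_mul, bu1, bu2, by1]
    · rw [add_mul y, bu2, f1]
    · have : b - b ^ 2 * (y + u * (1 - e)) = b * e - (b * e) ^ 2 * y := by
        rw [pow_two, mul_assoc b b, mul_add b y, bu1, f2]
      rw [this]; exact y3

end helpers

theorem agDrazin_finite_spectrum_iff_egDrazin {A : Type*} [NormedRing A] [NormedAlgebra ℂ A]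
    [CompleteSpace A] (a : A) :
    (∃ x : A, IsAgDrazinInverseOf x a ∧ (spectrum ℂ (a - a ^ 2 * x)).Finite) ↔
      ∃ x : A, a * x = x * a ∧ x * a * x = x ∧ IsGDrazinInv (a - a ^ 2 * x) := by
  have hnon : ∀ s : A, IsQuasinilpotent s → Nontrivial A := by
    intro s hs
    by_contra hA
    rw [not_nontrivial_iff_subsingleton] at hA
    have h0 : spectrum ℂ s = ∅ := spectrum.of_subsingleton s
    unfold IsQuasinilpotent at hs
    rw [h0] at hs
    exact (Set.singleton_nonempty (0 : ℂ)).ne_empty hs.symm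
  constructor
  · rintro ⟨x, ⟨h1, h2, h3⟩, hf⟩
    obtain ⟨_, _, _, hq⟩ := h3 1 one_ne_zero
    haveI := hnon _ hq
    exact ⟨x, h1, h2, gd_of_finite _ _ h3 hf.diff le_rfl⟩
  · rintro ⟨x, h1, h2, y, y1, y2, y3⟩
    haveI := hnon _ y3
    obtain ⟨b, hb⟩ : ∃ b, b = a - a ^ 2 * x := ⟨_, rfl⟩
    rw [← hb] at y1 y2 y3
    have axx : a * x * x = x := by rw [h1, h2]
    have bx : b * x = 0 := by
      rw [hb, sub_mul, pow_two, mul_assoc (a * a), mul_assoc a a, ← mul_assoc a x, axx, sub_self]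
    have xb : x * b = 0 := by
      have : x * (a ^ 2 * x) = x * a := by
        calc x * (a ^ 2 * x) = x * a * (a * x) := by rw [pow_two]; simp only [mul_assoc]
          _ = x * a * x * a := by rw [h1]; simp only [mul_assoc]
          _ = x * a := by rw [h2]
      rw [hb, mul_sub, this, sub_self]
    have yx : y * x = 0 := by
      calc y * x = y * b * y * x := by rw [y2]
        _ = y * (b * y) * x := by simp only [mul_assoc]
        _ = y * y * (b * x) := by rw [y1]; simp only [mul_assoc]
        _ = 0 := by rw [bx, mul_zero]
    have xy : x * y = 0 := by
      calc x * y = x * (y * b * y) := by rw [y2]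
        _ = (x * b) * y * y := by rw [← y1]; simp only [mul_assoc]
        _ = 0 := by rw [xb, zero_mul, zero_mul]
    have ab : a = b + a ^ 2 * x := by rw [hb]; abel
    have ay : a * y = b * y := by
      calc a * y = (b + a ^ 2 * x) * y := by rw [← ab]
        _ = b * y := by rw [add_mul, mul_assoc, xy, mul_zero, add_zero]
    have ya : y * a = y * b := by
      have k : Commute a x := h1
      calc y * a = y * (b + a ^ 2 * x) := by rw [← ab]
        _ = y * b := by
          rw [(k.pow_left 2).eq, mul_add, ← mul_assoc y x, yx, zero_mul, add_zero]
    have key : a - a ^ 2 * (x + y) = b - b ^ 2 * y := by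
      have : a ^ 2 * y = b ^ 2 * y := by
        calc a ^ 2 * y = a * (a * y) := by rw [pow_two, mul_assoc]
          _ = a * y * b := by rw [mul_assoc a y b, ← y1, ay]
          _ = b ^ 2 * y := by rw [ay, mul_assoc, ← y1, pow_two, mul_assoc]
      rw [mul_add, this, hb]; abel
    refine ⟨x + y, ⟨?_, ?_, ?_⟩, ?_⟩
    · rw [mul_add, add_mul, ay, ya, h1, y1]
    · calc (x + y) * a * (x + y) = x * a * x + (x * (a * y) + y * a * x) + y * a * y := by
            simp only [add_mul, mul_add, mul_assoc]; abel
        _ = x + y := by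
            rw [h2, ay, ya, y2, ← mul_assoc, xb, zero_mul, mul_assoc y b x, bx, mul_zero,
              add_zero, add_zero]
    · rw [key]; exact acc_of_quasi y3
    · rw [key, show spectrum ℂ (b - b ^ 2 * y) = {0} from y3]
      exact Set.finite_singleton 0
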